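/- For every integer N ≥ 1 and every θ ∈ ℝ^{2n}, the operator P_{N,θ} maps 𝒮(ℝⁿ) onto the space H_{N,θ} of quasi-periodic distributions: for every f ∈ 𝒮(ℝⁿ) the tempered distribution P_{N,θ}f belongs to H_{N,θ}, and for every ν ∈ H_{N,θ} there exists f ∈ 𝒮(ℝⁿ) with P_{N,θ}f = ν. -/

import Mathlib

open BigOperators

/-- The standard symplectic form `σ((q,p),(q',p')) = ⟨p,q'⟩ − ⟨p',q⟩` on
`ℝ^{2n} = ℝⁿ × ℝⁿ`, a point `x` being written as a pair `x = (q,p)`. -/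
def sigmaR (n : ℕ) (x y : (Fin n → ℝ) × (Fin n → ℝ)) : ℝ :=
  (∑ i : Fin n, x.2 i * y.1 i) - ∑ i : Fin n, y.2 i * x.1 i

/-- `Q((q,p)) = ⟨q,p⟩`. -/
def QR (n : ℕ) (x : (Fin n → ℝ) × (Fin n → ℝ)) : ℝ :=
  ∑ i : Fin n, x.1 i * x.2 i

/-- The Schrödinger representation operator:
`(ρ_N(x,ζ)f)(y) = ζ^N e^{2πiN(⟨p,y⟩ − ⟨q,p⟩/2)} f(y−q)` for `x = (q,p)`. -/
noncomputable def rho (n N : ℕ) (x : (Fin n → ℝ) × (Fin n → ℝ)) (ζ : ℂ)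
    (f : (Fin n → ℝ) → ℂ) : (Fin n → ℝ) → ℂ :=
  fun y => ζ ^ N * Complex.exp (2 * Real.pi * Complex.I * (N : ℂ) *
      (((∑ i : Fin n, x.2 i * y i : ℝ) : ℂ) - ((QR n x : ℝ) : ℂ) / 2)) * f (y - x.1)

/-- Coercion of an integer lattice point `w ∈ ℤ^{2n}` into `ℝ^{2n}`. -/
def castVec (n : ℕ) (w : (Fin n → ℤ) × (Fin n → ℤ)) : (Fin n → ℝ) × (Fin n → ℝ) :=
  (fun i => (w.1 i : ℝ), fun i => (w.2 i : ℝ))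

/-- The pairing of the Dirac comb `e^θ_j` against a test function:
`e^θ_j(f) = N^{−n/2} Σ_{k∈ℤⁿ} e^{−2πi⟨θ₂,k⟩} f(k + (j−θ₁)/N)`. -/
noncomputable def comb (n N : ℕ) (θ : (Fin n → ℝ) × (Fin n → ℝ)) (j : Fin n → ℤ)
    (f : (Fin n → ℝ) → ℂ) : ℂ :=
  (((N : ℝ) ^ (-(n : ℝ) / 2) : ℝ) : ℂ) *
    ∑' k : Fin n → ℤ,
      Complex.exp (-(2 * Real.pi * Complex.I) *
          ((∑ i : Fin n, θ.2 i * (k i : ℝ) : ℝ) : ℂ)) *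
        f (fun i => (k i : ℝ) + ((j i : ℝ) - θ.1 i) / N)

/-- The transformed test function defining the dual action of `ρ_N(x,ζ)` on tempered
distributions by `(ρ_N(x,ζ)ν)(f) := ν(f̃)`, namely
`f̃(z) = ζ^N e^{2πiN(⟨p,z⟩ + ⟨q,p⟩/2)} f(z+q)` for `x = (q,p)`. -/
noncomputable def rhoDualTest (n N : ℕ) (x : (Fin n → ℝ) × (Fin n → ℝ)) (ζ : ℂ)
    (f : (Fin n → ℝ) → ℂ) : (Fin n → ℝ) → ℂ :=
  fun z => ζ ^ N * Complex.exp (2 * Real.pi * Complex.I * (N : ℂ) *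
      (((∑ i : Fin n, x.2 i * z i : ℝ) : ℂ) + ((QR n x : ℝ) : ℂ) / 2)) * f (z + x.1)

open MeasureTheory

/-- The space `H_{N,θ}` of quasi-periodic tempered distributions, where the dual action of
`ρ_N(w, e^{πiQ(w)})` on a distribution `ν` is `ν ∘ (rhoT w e^{πiQ(w)})` with
`rhoT x ζ : 𝒮(ℝⁿ) → 𝒮(ℝⁿ)` the (continuous linear) test-function transform
`(rhoT x ζ f)(z) = ζ^N e^{2πiN(⟨p,z⟩+⟨q,p⟩/2)} f(z+q)`. -/
def quasiPeriodicSet (n N : ℕ)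
    (rhoT : (Fin n → ℝ) × (Fin n → ℝ) → ℂ →
      (SchwartzMap ((Fin n) → ℝ) ℂ →L[ℂ] SchwartzMap ((Fin n) → ℝ) ℂ))
    (θ : (Fin n → ℝ) × (Fin n → ℝ)) :
    Set (SchwartzMap ((Fin n) → ℝ) ℂ →L[ℂ] ℂ) :=
  {ν | ∀ w : (Fin n → ℤ) × (Fin n → ℤ), ∀ f,
      ν (rhoT (castVec n w)
          (Complex.exp (Real.pi * Complex.I * ((QR n (castVec n w) : ℝ) : ℂ))) f)
        = Complex.exp (2 * Real.pi * Complex.I *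
            ((sigmaR n θ (castVec n w) : ℝ) : ℂ)) * ν f}

/-- The pairing `⟨P_{N,θ}f, g⟩ = Σ_{w∈ℤ^{2n}} e^{−2πiσ(θ,w)} ∫ (ρ_N(w,e^{πiQ(w)})f)(y) g(y) dy`
defining the projector `P_{N,θ} : 𝒮(ℝⁿ) → 𝒮'(ℝⁿ)`. -/
noncomputable def Ppairing (n N : ℕ) (θ : (Fin n → ℝ) × (Fin n → ℝ))
    (f g : (Fin n → ℝ) → ℂ) : ℂ :=
  ∑' w : (Fin n → ℤ) × (Fin n → ℤ),
    Complex.exp (-(2 * Real.pi * Complex.I) * ((sigmaR n θ (castVec n w) : ℝ) : ℂ)) *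
      ∫ y : Fin n → ℝ,
        rho n N (castVec n w)
          (Complex.exp (Real.pi * Complex.I * ((QR n (castVec n w) : ℝ) : ℂ))) f y * g y

section
open BigOperators MeasureTheory
open scoped SchwartzMap
namespace QP

lemma summable_lattice (n : ℕ) :
    Summable fun k : Fin n → ℤ => ((1 + ‖fun i => (k i : ℝ)‖) ^ (2 * n))⁻¹ := by
  have h1 : Summable fun m : ℤ => ((1 + |(m : ℝ)|) ^ 2)⁻¹ := by
    have h0 : Summable fun m : ℤ => 1 / |(m : ℝ)| ^ (2:ℕ) := by
      simpa using (Real.summable_one_div_int_pow (p := 2)).2 (by norm_num)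
    refine Summable.of_norm_bounded_eventually (g := fun m : ℤ => 1 / |(m : ℝ)| ^ (2:ℕ)) h0 ?_
    have : ({0} : Set ℤ).Finite := Set.finite_singleton 0
    refine this.subset ?_
    intro m hm
    by_contra hne
    apply hm
    have hpos : 0 < |(m : ℝ)| := by
      have : (m : ℝ) ≠ 0 := by exact_mod_cast hne
      positivity
    show ‖((1 + |(m : ℝ)|) ^ 2)⁻¹‖ ≤ 1 / |(m : ℝ)| ^ 2
    rw [Real.norm_of_nonneg (by positivity), one_div]
    gcongr
    linarith
  set T := ∑' m : ℤ, ((1 + |(m : ℝ)|) ^ 2)⁻¹ with hT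
  refine summable_of_sum_le (c := T ^ n) (fun _ => by positivity) ?_
  intro u
  classical
  have hle : ∀ k : Fin n → ℤ, ((1 + ‖fun i => (k i : ℝ)‖) ^ (2 * n))⁻¹ ≤
      ∏ i, ((1 + |(k i : ℝ)|) ^ 2)⁻¹ := by
    intro k
    rw [Finset.prod_inv_distrib]
    gcongr
    · rw [pow_mul]
      calc ∏ i, (1 + |(k i : ℝ)|) ^ 2 ≤ ∏ i : Fin n, (1 + ‖fun i => (k i : ℝ)‖) ^ 2 := by
            refine Finset.prod_le_prod (fun i _ => by positivity) fun i _ => ?_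
            gcongr
            exact norm_le_pi_norm (fun i => (k i : ℝ)) i
        _ = _ := by simp
  calc ∑ k ∈ u, ((1 + ‖fun i => (k i : ℝ)‖) ^ (2 * n))⁻¹
      ≤ ∑ k ∈ u, ∏ i, ((1 + |(k i : ℝ)|) ^ 2)⁻¹ := Finset.sum_le_sum fun k _ => hle k
    _ ≤ ∑ k ∈ Fintype.piFinset (fun i => u.image (fun k : Fin n → ℤ => k i)),
          ∏ i, ((1 + |(k i : ℝ)|) ^ 2)⁻¹ := by
        refine Finset.sum_le_sum_of_subset_of_nonneg ?_ (fun k _ _ => by positivity)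
        intro k hk
        rw [Fintype.mem_piFinset]
        intro i
        exact Finset.mem_image_of_mem _ hk
    _ = ∏ i : Fin n, ∑ m ∈ u.image (fun k : Fin n → ℤ => k i), ((1 + |(m : ℝ)|) ^ 2)⁻¹ := by
        rw [Finset.prod_univ_sum]
    _ ≤ ∏ i : Fin n, T := by
        refine Finset.prod_le_prod (fun i _ => Finset.sum_nonneg fun _ _ => by positivity) fun i _ => ?_
        exact h1.sum_le_tsum _ fun _ _ => by positivity
    _ = T ^ n := by simp

variable {E : Type*} [NormedAddCommGroup E] [NormedSpace ℝ E]

/-- absolutely convergent series of Schwartz functions -/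
lemma hasSum_schwartz {ι : Type*} (h : ι → 𝓢(E, ℂ))
    (hs : ∀ k l, Summable fun i => SchwartzMap.seminorm ℂ k l (h i)) :
    ∃ H : 𝓢(E, ℂ), HasSum h H ∧ ∀ x, HasSum (fun i => h i x) (H x) := by
  have hb : ∀ l i x, ‖iteratedFDeriv ℝ l (h i) x‖ ≤ SchwartzMap.seminorm ℂ 0 l (h i) :=
    fun l i x => SchwartzMap.norm_iteratedFDeriv_le_seminorm ℂ _ _ _
  have hcd : ContDiff ℝ ((⊤ : ℕ∞) : WithTop ℕ∞) (fun x => ∑' i, h i x) :=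
    contDiff_tsum (N := ⊤) (v := fun l i => SchwartzMap.seminorm ℂ 0 l (h i))
      (fun i => (h i).smooth ⊤) (fun l _ => hs 0 l) (fun l i x _ => hb l i x)
  have hD : ∀ l x, iteratedFDeriv ℝ l (fun x => ∑' i, h i x) x =
      ∑' i, iteratedFDeriv ℝ l (h i) x := fun l x => by
    have := iteratedFDeriv_tsum (𝕜 := ℝ) (f := fun i => ⇑(h i)) (N := ⊤)
      (v := fun l i => SchwartzMap.seminorm ℂ 0 l (h i))
      (fun i => (h i).smooth ⊤) (fun l _ => hs 0 l) (fun l i x _ => hb l i x) (k := l) le_top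
    exact congrFun this x
  have hsumD : ∀ l x, Summable fun i => iteratedFDeriv ℝ l (h i) x := fun l x =>
    Summable.of_norm_bounded (hs 0 l) (fun i => hb l i x)
  have hkey : ∀ k l x (F : Finset ι), ‖x‖ ^ k *
      ‖∑' i : {i // i ∉ F}, iteratedFDeriv ℝ l (h i) x‖ ≤
      ∑' i : {i // i ∉ F}, SchwartzMap.seminorm ℂ k l (h i) := by
    intro k l x F
    have h1 : Summable fun i : {i // i ∉ F} => ‖iteratedFDeriv ℝ l (h i) x‖ :=
      (Summable.of_nonneg_of_le (fun _ => norm_nonneg _) (fun i => hb l i x) (hs 0 l)).comp_injective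
        (i := ((↑) : {i // i ∉ F} → ι)) Subtype.val_injective
    calc _ ≤ ‖x‖ ^ k * ∑' i : {i // i ∉ F}, ‖iteratedFDeriv ℝ l (h i) x‖ := by
          gcongr
          exact norm_tsum_le_tsum_norm h1
      _ = ∑' i : {i // i ∉ F}, ‖x‖ ^ k * ‖iteratedFDeriv ℝ l (h i) x‖ := tsum_mul_left.symm
      _ ≤ _ := by
          refine Summable.tsum_le_tsum (fun i => SchwartzMap.le_seminorm ℂ k l (h i) x)
            (h1.mul_left _) ?_
          exact (hs k l).comp_injective (i := ((↑) : {i // i ∉ F} → ι)) Subtype.val_injective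
  let H : 𝓢(E, ℂ) :=
    { toFun := fun x => ∑' i, h i x
      smooth' := hcd
      decay' := by
        intro k l
        refine ⟨∑' i, SchwartzMap.seminorm ℂ k l (h i), fun x => ?_⟩
        rw [hD]
        have h1 : Summable fun i => ‖iteratedFDeriv ℝ l (h i) x‖ :=
          (Summable.of_nonneg_of_le (fun _ => norm_nonneg _) (fun i => hb l i x) (hs 0 l))
        calc _ ≤ ‖x‖ ^ k * ∑' i, ‖iteratedFDeriv ℝ l (h i) x‖ := by
              gcongr
              exact norm_tsum_le_tsum_norm h1
          _ = ∑' i, ‖x‖ ^ k * ‖iteratedFDeriv ℝ l (h i) x‖ := tsum_mul_left.symm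
          _ ≤ _ := Summable.tsum_le_tsum (fun i => SchwartzMap.le_seminorm ℂ k l (h i) x)
                (h1.mul_left _) (hs k l) }
  have hsum0 : ∀ x, Summable fun i => h i x := fun x =>
    Summable.of_norm_bounded (hs 0 0) (fun i => SchwartzMap.norm_le_seminorm ℂ _ _)
  refine ⟨H, ?_, fun x => (hsum0 x).hasSum⟩
  rw [HasSum, (schwartz_withSeminorms ℂ E ℂ).tendsto_nhds]
  rintro ⟨k, l⟩ ε hε
  have ht := tendsto_tsum_compl_atTop_zero (fun i => SchwartzMap.seminorm ℂ k l (h i))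
  have := (ht.eventually (gt_mem_nhds hε))
  simp only [SummationFilter.unconditional_filter]
  filter_upwards [this] with F hF
  refine lt_of_le_of_lt ?_ hF
  rw [SchwartzMap.schwartzSeminormFamily_apply, ← map_neg_eq_map]
  refine SchwartzMap.seminorm_le_bound ℂ k l _ (tsum_nonneg fun i => apply_nonneg _ _) fun x => ?_
  refine le_trans (le_of_eq ?_) (hkey k l x F)
  congr 2
  have e1 : (⇑(-(∑ i ∈ F, h i - H)) : E → ℂ) = (fun x => ∑' i, h i x) - fun x => ∑ i ∈ F, h i x := by
    ext y
    simp [H]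
    rfl
  rw [e1, iteratedFDeriv_sub_apply (hcd.contDiffAt.of_le (by exact_mod_cast le_top))
    (ContDiff.contDiffAt (ContDiff.sum fun i _ => (h i).smooth l)), hD,
    iteratedFDeriv_fun_sum_apply (fun i _ => ((h i).smooth l).contDiffAt), ← (hsumD l x).sum_add_tsum_subtype_compl F]
  simp
end QP
end

section
open BigOperators MeasureTheory
open scoped SchwartzMap
namespace QP

/-- the character `y ↦ e^{2πi⟨ξ,y⟩}` -/
noncomputable def eR {n : ℕ} (ξ y : Fin n → ℝ) : ℂ :=
  Complex.exp (2 * Real.pi * Complex.I * ((∑ i, ξ i * y i : ℝ) : ℂ))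

lemma norm_eR {n : ℕ} (ξ y : Fin n → ℝ) : ‖eR ξ y‖ = 1 := by
  rw [eR, show 2 * Real.pi * Complex.I * ((∑ i, ξ i * y i : ℝ) : ℂ) =
    ((2 * Real.pi * (∑ i, ξ i * y i) : ℝ) : ℂ) * Complex.I by push_cast; ring]
  exact Complex.norm_exp_ofReal_mul_I _

noncomputable def mulS {E : Type*} [NormedAddCommGroup E] [NormedSpace ℝ E]
    (f g : 𝓢(E, ℂ)) : 𝓢(E, ℂ) :=
  SchwartzMap.pairing (ContinuousLinearMap.mul ℂ ℂ) f g

@[simp] lemma mulS_apply {E : Type*} [NormedAddCommGroup E] [NormedSpace ℝ E]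
    (f g : 𝓢(E, ℂ)) (x : E) : mulS f g x = f x * g x := rfl

variable {E : Type*} [NormedAddCommGroup E] [NormedSpace ℝ E]

lemma deriv_decay (f : 𝓢(E, ℂ)) (M l i : ℕ) (hi : i ≤ l) (x : E) :
    ‖iteratedFDeriv ℝ i f x‖ ≤ (2 ^ M * ((Finset.Iic (M, l)).sup
      (schwartzSeminormFamily ℂ E ℂ)) f) * ((1 + ‖x‖) ^ M)⁻¹ := by
  have := SchwartzMap.one_add_le_sup_seminorm_apply (𝕜 := ℂ) (m := (M, l)) (k := M) (n := i)
    le_rfl hi f x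
  rw [← div_eq_mul_inv, le_div_iff₀ (by positivity), mul_comm]
  exact this

/-- uniform bound for the Schwartz seminorms of `f(· - a) g` -/
lemma seminorm_translate_mul (f : 𝓢(E, ℂ)) (k l M : ℕ) :
    ∃ (s : Finset (ℕ × ℕ)) (C : ℝ), 0 ≤ C ∧ ∀ (g : 𝓢(E, ℂ)) (a : E),
      SchwartzMap.seminorm ℂ k l (mulS (f.compSubConstCLM ℂ a) g) ≤
        C * ((1 + ‖a‖) ^ M)⁻¹ * (s.sup (schwartzSeminormFamily ℂ E ℂ)) g := by
  set A := 2 ^ M * ((Finset.Iic (M, l)).sup (schwartzSeminormFamily ℂ E ℂ)) f with hA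
  have hA0 : 0 ≤ A := by positivity
  refine ⟨Finset.Iic (M + k, l), 2 ^ l * A * 2 ^ (M + k), by positivity, fun g a => ?_⟩
  set B := ((Finset.Iic (M + k, l)).sup (schwartzSeminormFamily ℂ E ℂ)) g with hB
  have hB0 : 0 ≤ B := by positivity
  refine SchwartzMap.seminorm_le_bound ℂ k l _ (by positivity) fun x => ?_
  have hfun : (⇑(mulS (f.compSubConstCLM ℂ a) g) : E → ℂ) =
      fun y => (f.compSubConstCLM ℂ a) y * g y := rfl
  have hfun2 : (⇑(f.compSubConstCLM ℂ a) : E → ℂ) = fun y => f (y - a) := by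
    ext y; simp
  have hL := norm_iteratedFDeriv_mul_le (𝕜 := ℝ) (n := l) (N := l)
    ((f.compSubConstCLM ℂ a).smooth l) (g.smooth l) x le_rfl
  rw [hfun]
  have hterm : ∀ i ∈ Finset.range (l + 1),
      (l.choose i : ℝ) * ‖iteratedFDeriv ℝ i (f.compSubConstCLM ℂ a) x‖ *
        ‖iteratedFDeriv ℝ (l - i) g x‖ ≤
      (l.choose i : ℝ) * ((A * ((1 + ‖x - a‖) ^ M)⁻¹) *
        (2 ^ (M + k) * B * ((1 + ‖x‖) ^ (M + k))⁻¹)) := by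
    intro i hi
    rw [mul_assoc]
    gcongr
    · rw [hfun2, iteratedFDeriv_comp_sub]
      exact deriv_decay f M l i (by simpa [Nat.lt_succ_iff] using hi) (x - a)
    · exact deriv_decay g (M + k) l (l - i) (Nat.sub_le _ _) x
  have hsum := hL.trans (Finset.sum_le_sum hterm)
  rw [← Finset.sum_mul, show ∑ i ∈ Finset.range (l + 1), (l.choose i : ℝ) = 2 ^ l by
    exact_mod_cast Nat.sum_range_choose l] at hsum
  have hx : ‖x‖ ^ k * ((1 + ‖x‖) ^ (M + k))⁻¹ ≤ ((1 + ‖x‖) ^ M)⁻¹ := by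
    rw [pow_add, mul_inv, mul_comm, mul_assoc]
    refine mul_le_of_le_one_right (by positivity) ?_
    rw [inv_mul_le_iff₀ (by positivity), mul_one]
    gcongr
    linarith
  have hax : ((1 + ‖x - a‖) ^ M)⁻¹ * ((1 + ‖x‖) ^ M)⁻¹ ≤ ((1 + ‖a‖) ^ M)⁻¹ := by
    rw [← mul_inv, ← mul_pow]
    gcongr
    have h1 : ‖a‖ ≤ ‖x - a‖ + ‖x‖ := by
      have := norm_sub_le x (x - a)
      rw [sub_sub_cancel] at this
      linarith
    nlinarith [norm_nonneg (x - a), norm_nonneg x]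
  calc ‖x‖ ^ k * _ ≤ ‖x‖ ^ k * (2 ^ l * ((A * ((1 + ‖x - a‖) ^ M)⁻¹) *
        (2 ^ (M + k) * B * ((1 + ‖x‖) ^ (M + k))⁻¹))) := by gcongr
    _ = 2 ^ l * A * 2 ^ (M + k) * B * (((1 + ‖x - a‖) ^ M)⁻¹ *
        (‖x‖ ^ k * ((1 + ‖x‖) ^ (M + k))⁻¹)) := by ring
    _ ≤ 2 ^ l * A * 2 ^ (M + k) * B * (((1 + ‖x - a‖) ^ M)⁻¹ * ((1 + ‖x‖) ^ M)⁻¹) := by gcongr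
    _ ≤ 2 ^ l * A * 2 ^ (M + k) * B * ((1 + ‖a‖) ^ M)⁻¹ := by gcongr
    _ = _ := by ring

lemma contDiff_eR {n : ℕ} (ξ : Fin n → ℝ) (m : WithTop ℕ∞) : ContDiff ℝ m (eR ξ) := by
  have h2 : ContDiff ℝ m (fun y : Fin n → ℝ => ((∑ i, ξ i * y i : ℝ) : ℂ)) :=
    Complex.ofRealCLM.contDiff.comp
      (f := fun y : Fin n → ℝ => ∑ i, ξ i * y i)
      (ContDiff.sum fun i _ => contDiff_const.mul (contDiff_apply ℝ ℝ i))
  exact (contDiff_const.mul h2).cexp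

lemma iteratedFDeriv_eR {n : ℕ} (ξ : Fin n → ℝ) (i : ℕ) (y : Fin n → ℝ) :
    ‖iteratedFDeriv ℝ i (eR ξ) y‖ ≤ i.factorial * (2 * Real.pi * n * (1 + ‖ξ‖)) ^ i := by
  let L : (Fin n → ℝ) →L[ℝ] ℝ := ∑ j, (2 * Real.pi * ξ j) • ContinuousLinearMap.proj j
  have hL : ∀ y, L y = 2 * Real.pi * ∑ j, ξ j * y j := by
    intro y
    simp only [L, _root_.sum_apply, _root_.smul_apply,
      ContinuousLinearMap.proj_apply, smul_eq_mul, Finset.mul_sum, mul_assoc]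
  have hcomp : eR ξ = (fun t : ℝ => Complex.exp (t * Complex.I)) ∘ L := by
    ext y
    simp only [eR, Function.comp, hL]
    congr 1
    push_cast
    ring
  have hg : ∀ m : ℕ, iteratedDeriv m (fun t : ℝ => Complex.exp (t * Complex.I)) =
      fun t : ℝ => Complex.I ^ m * Complex.exp (t * Complex.I) := by
    intro m
    induction m with
    | zero => simp
    | succ m ih =>
      rw [iteratedDeriv_succ, ih]
      ext t
      have h1 : HasDerivAt (fun t : ℝ => Complex.exp (t * Complex.I))
          (Complex.exp (t * Complex.I) * (1 * Complex.I)) t :=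
        ((Complex.ofRealCLM.hasDerivAt (x := t)).mul_const Complex.I).cexp
      rw [(h1.const_mul _).deriv]
      ring
  have hgc : ContDiff ℝ i (fun t : ℝ => Complex.exp (t * Complex.I)) :=
    (Complex.ofRealCLM.contDiff.mul contDiff_const).cexp
  have hnL : ‖L‖ ≤ 2 * Real.pi * n * (1 + ‖ξ‖) := by
    refine ContinuousLinearMap.opNorm_le_bound _ (by positivity) fun y => ?_
    rw [hL, Real.norm_eq_abs, abs_mul, abs_of_pos (by positivity)]
    have hs : |∑ j, ξ j * y j| ≤ n * (‖ξ‖ * ‖y‖) := by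
      refine (Finset.abs_sum_le_sum_abs _ _).trans ?_
      calc ∑ j, |ξ j * y j| ≤ ∑ j : Fin n, ‖ξ‖ * ‖y‖ := by
            refine Finset.sum_le_sum fun j _ => ?_
            rw [abs_mul]
            gcongr
            · exact norm_le_pi_norm ξ j
            · exact norm_le_pi_norm y j
        _ = _ := by simp
    calc 2 * Real.pi * |∑ j, ξ j * y j| ≤ 2 * Real.pi * (n * (‖ξ‖ * ‖y‖)) := by gcongr
      _ ≤ 2 * Real.pi * (n * ((1 + ‖ξ‖) * ‖y‖)) := by gcongr; linarith
      _ = _ := by ring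
  rw [hcomp]
  refine (norm_iteratedFDeriv_comp_le (n := i) hgc L.contDiff le_rfl y (C := 1)
    (D := 2 * Real.pi * n * (1 + ‖ξ‖)) ?_ ?_).trans (by simp)
  · intro m _
    rw [norm_iteratedFDeriv_eq_norm_iteratedDeriv, hg]
    simp [Complex.norm_exp_ofReal_mul_I]
  · intro m hm _
    obtain ⟨m, rfl⟩ : ∃ m', m = m' + 1 := ⟨m - 1, by omega⟩
    rw [← norm_iteratedFDeriv_fderiv]
    have hfd : fderiv ℝ L = fun _ => L := by ext1 x; exact L.fderiv
    rw [hfd]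
    rcases Nat.eq_zero_or_pos m with rfl | hm
    · simpa using hnL
    · rw [iteratedFDeriv_const_of_ne (by omega)]
      simp only [Pi.zero_apply, norm_zero]
      positivity

/-- polynomial bound for the seminorms of `e_ξ b` -/
lemma seminorm_eR_mul {n : ℕ} (b : 𝓢(Fin n → ℝ, ℂ)) (k l : ℕ) :
    ∃ (C : ℝ), 0 ≤ C ∧ ∀ (ξ : Fin n → ℝ) (F : 𝓢(Fin n → ℝ, ℂ)), (∀ y, F y = eR ξ y * b y) →
      SchwartzMap.seminorm ℂ k l F ≤ C * (1 + ‖ξ‖) ^ l := by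
  set B := 2 ^ k * ((Finset.Iic (k, l)).sup (schwartzSeminormFamily ℂ (Fin n → ℝ) ℂ)) b with hB
  have hB0 : 0 ≤ B := by positivity
  set c : ℝ := 1 + 2 * Real.pi * n with hc
  have hc1 : 1 ≤ c := by rw [hc]; have := Real.pi_pos; nlinarith [(Nat.cast_nonneg n : (0:ℝ) ≤ n)]
  refine ⟨2 ^ l * (l.factorial * c ^ l * B), by positivity, fun ξ F hF => ?_⟩
  refine SchwartzMap.seminorm_le_bound ℂ k l _ (by positivity) fun x => ?_
  have hfun : (⇑F : (Fin n → ℝ) → ℂ) = fun y => eR ξ y * b y := funext hF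
  have hL := norm_iteratedFDeriv_mul_le (𝕜 := ℝ) (n := l) (N := l)
    (contDiff_eR ξ l) (b.smooth l) x le_rfl
  rw [hfun]
  have hterm : ∀ i ∈ Finset.range (l + 1),
      (l.choose i : ℝ) * ‖iteratedFDeriv ℝ i (eR ξ) x‖ *
        ‖iteratedFDeriv ℝ (l - i) b x‖ ≤
      (l.choose i : ℝ) * ((l.factorial * (c ^ l * (1 + ‖ξ‖) ^ l)) *
        (B * ((1 + ‖x‖) ^ k)⁻¹)) := by
    intro i hi
    have hil : i ≤ l := by simpa [Nat.lt_succ_iff] using hi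
    rw [mul_assoc]
    gcongr
    · refine (iteratedFDeriv_eR ξ i x).trans ?_
      rw [← mul_pow]
      have h1 : 1 ≤ c * (1 + ‖ξ‖) := by nlinarith [norm_nonneg ξ]
      calc (i.factorial : ℝ) * (2 * Real.pi * n * (1 + ‖ξ‖)) ^ i
          ≤ i.factorial * (c * (1 + ‖ξ‖)) ^ i := by
            gcongr
            rw [hc]; linarith
        _ ≤ l.factorial * (c * (1 + ‖ξ‖)) ^ l := by
            gcongr
    · exact deriv_decay b k l (l - i) (Nat.sub_le _ _) x
  have hsum := hL.trans (Finset.sum_le_sum hterm)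
  rw [← Finset.sum_mul, show ∑ i ∈ Finset.range (l + 1), (l.choose i : ℝ) = 2 ^ l by
    exact_mod_cast Nat.sum_range_choose l] at hsum
  have hx : ‖x‖ ^ k * ((1 + ‖x‖) ^ k)⁻¹ ≤ 1 := by
    rw [mul_inv_le_iff₀ (by positivity), one_mul]
    gcongr
    linarith
  calc ‖x‖ ^ k * _ ≤ ‖x‖ ^ k * (2 ^ l * ((l.factorial * (c ^ l * (1 + ‖ξ‖) ^ l)) *
        (B * ((1 + ‖x‖) ^ k)⁻¹))) := by gcongr
    _ = 2 ^ l * (l.factorial * c ^ l * B) * (1 + ‖ξ‖) ^ l * (‖x‖ ^ k * ((1 + ‖x‖) ^ k)⁻¹) := by ring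
    _ ≤ _ := mul_le_of_le_one_right (by positivity) hx

end QP
end

section
open BigOperators MeasureTheory
open scoped SchwartzMap FourierTransform
namespace QP

lemma integral_eR_eq_fourier {n : ℕ} (h : 𝓢(Fin n → ℝ, ℂ)) (ξ : Fin n → ℝ) :
    ∫ y, eR ξ y * h y = (𝓕 (SchwartzMap.compCLMOfContinuousLinearEquiv ℂ
      (EuclideanSpace.equiv (Fin n) ℝ) h)) (WithLp.toLp 2 (-ξ)) := by
  rw [SchwartzMap.fourier_coe, Real.fourier_eq']
  rw [← (PiLp.volume_preserving_toLp (Fin n)).integral_comp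
    (MeasurableEquiv.toLp 2 _).measurableEmbedding]
  refine integral_congr_ae (Filter.Eventually.of_forall fun y => ?_)
  simp only [SchwartzMap.compCLMOfContinuousLinearEquiv_apply, Function.comp, smul_eq_mul]
  congr 1
  rw [eR]
  congr 1
  simp [PiLp.inner_apply, Finset.mul_sum]
  simp only [Finset.sum_mul]
  refine Finset.sum_congr rfl fun i _ => by ring

lemma fourier_decay (n M : ℕ) : ∃ (s : Finset (ℕ × ℕ)) (C : ℝ), 0 ≤ C ∧
    ∀ (h : 𝓢(Fin n → ℝ, ℂ)) (ξ : Fin n → ℝ),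
      ‖∫ y, eR ξ y * h y‖ ≤ C * ((1 + ‖ξ‖) ^ M)⁻¹ *
        (s.sup (schwartzSeminormFamily ℂ (Fin n → ℝ) ℂ)) h := by
  let T : 𝓢(Fin n → ℝ, ℂ) →L[ℂ] 𝓢(EuclideanSpace ℝ (Fin n), ℂ) :=
    (SchwartzMap.fourierTransformCLM ℂ).comp
    (SchwartzMap.compCLMOfContinuousLinearEquiv ℂ (EuclideanSpace.equiv (Fin n) ℝ))
  let q0 := (Finset.Iic (M, 0)).sup (schwartzSeminormFamily ℂ (EuclideanSpace ℝ (Fin n)) ℂ)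
  have hq0 : Continuous q0 :=
    Seminorm.continuous_finsetSup fun i _ =>
      (schwartz_withSeminorms ℂ (EuclideanSpace ℝ (Fin n)) ℂ).continuous_seminorm i
  obtain ⟨s, C, hC, hle⟩ := Seminorm.bound_of_continuous
    (schwartz_withSeminorms ℂ (Fin n → ℝ) ℂ) (q0.comp T.toLinearMap) (hq0.comp T.continuous)
  refine ⟨s, 2 ^ M * C, by positivity, fun h ξ => ?_⟩
  rw [integral_eR_eq_fourier]
  have h1 := deriv_decay (T h) M 0 0 le_rfl (WithLp.toLp 2 (-ξ))
  rw [norm_iteratedFDeriv_zero] at h1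
  refine h1.trans ?_
  have h2 : q0 (T h) ≤ C * (s.sup (schwartzSeminormFamily ℂ (Fin n → ℝ) ℂ)) h := hle h
  have h3 : ‖ξ‖ ≤ ‖(WithLp.toLp 2 (-ξ) : EuclideanSpace ℝ (Fin n))‖ := by
    rw [pi_norm_le_iff_of_nonneg (norm_nonneg _)]
    intro i
    have := PiLp.norm_apply_le (WithLp.toLp 2 (-ξ) : EuclideanSpace ℝ (Fin n)) i
    simpa using this
  have h4 : ((1 + ‖(WithLp.toLp 2 (-ξ) : EuclideanSpace ℝ (Fin n))‖) ^ M)⁻¹ ≤ ((1 + ‖ξ‖) ^ M)⁻¹ := by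
    gcongr
  calc _ ≤ (2 ^ M * (C * (s.sup (schwartzSeminormFamily ℂ (Fin n → ℝ) ℂ)) h)) * ((1 + ‖ξ‖) ^ M)⁻¹ := by
        gcongr
    _ = _ := by ring
end QP
end

section
open BigOperators MeasureTheory
open scoped SchwartzMap FourierTransform
namespace QP
variable {n : ℕ}

lemma lattice_bound (h : 𝓢(Fin n → ℝ, ℂ)) (R : ℝ) (hR : 0 ≤ R) : ∃ C : ℝ, 0 ≤ C ∧
    ∀ (y : Fin n → ℝ) (k : Fin n → ℤ), ‖y‖ ≤ R →
      ‖h (y + fun i => (k i : ℝ))‖ ≤ C * ((1 + ‖fun i => (k i : ℝ)‖) ^ (2 * n))⁻¹ := by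
  set A := 2 ^ (2 * n) * ((Finset.Iic (2 * n, 0)).sup
      (schwartzSeminormFamily ℂ (Fin n → ℝ) ℂ)) h with hA
  have hA0 : 0 ≤ A := by positivity
  refine ⟨A * (1 + R) ^ (2 * n), by positivity, fun y k hy => ?_⟩
  have h1 := deriv_decay h (2 * n) 0 0 le_rfl (y + fun i => (k i : ℝ))
  rw [norm_iteratedFDeriv_zero] at h1
  refine h1.trans ?_
  rw [← hA, mul_assoc A]
  refine mul_le_mul_of_nonneg_left ?_ hA0
  have h2 : 1 + ‖fun i => (k i : ℝ)‖ ≤ (1 + R) * (1 + ‖y + fun i => (k i : ℝ)‖) := by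
    have : ‖fun i => (k i : ℝ)‖ ≤ ‖y + fun i => (k i : ℝ)‖ + ‖y‖ := by
      have := norm_sub_le (y + fun i => (k i : ℝ)) y
      rwa [add_sub_cancel_left] at this
    nlinarith [norm_nonneg (y + fun i => (k i : ℝ)), norm_nonneg y]
  rw [inv_le_comm₀ (by positivity) (by positivity), mul_inv, inv_inv, ← div_eq_inv_mul,
    div_le_iff₀ (by positivity), ← mul_pow]
  gcongr
  linarith

lemma lattice_summable (h : 𝓢(Fin n → ℝ, ℂ)) (y : Fin n → ℝ) :
    Summable fun k : Fin n → ℤ => h (y + fun i => (k i : ℝ)) := by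
  obtain ⟨C, -, hC⟩ := lattice_bound h ‖y‖ (norm_nonneg _)
  exact Summable.of_norm_bounded ((summable_lattice n).mul_left C) fun k => hC y k le_rfl

noncomputable def per (h : 𝓢(Fin n → ℝ, ℂ)) (y : Fin n → ℝ) : ℂ :=
  ∑' k : Fin n → ℤ, h (y + fun i => (k i : ℝ))

lemma continuous_per (h : 𝓢(Fin n → ℝ, ℂ)) : Continuous (per h) := by
  rw [continuous_iff_continuousAt]
  intro y0
  obtain ⟨C, -, hC⟩ := lattice_bound h (‖y0‖ + 1) (by positivity)
  have : ContinuousOn (per h) (Metric.ball 0 (‖y0‖ + 1)) := by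
    refine continuousOn_tsum (fun k => ?_) ((summable_lattice n).mul_left C) fun k y hy => ?_
    · exact (h.continuous.comp (by fun_prop)).continuousOn
    · refine hC y k ?_
      simpa using (mem_ball_zero_iff.1 hy).le
  exact this.continuousAt (Metric.isOpen_ball.mem_nhds (by simp))

lemma per_add (h : 𝓢(Fin n → ℝ, ℂ)) (y : Fin n → ℝ) (m : Fin n → ℤ) :
    per h (y + fun i => (m i : ℝ)) = per h y := by
  unfold per
  rw [← (Equiv.addLeft m).tsum_eq (fun k : Fin n → ℤ => h (y + fun i => (k i : ℝ)))]
  refine tsum_congr fun k => ?_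
  congr 1
  ext i
  simp; ring

def toTorus (y : Fin n → ℝ) : UnitAddTorus (Fin n) := Pi.map (fun _ (t : ℝ) => (t : UnitAddCircle)) y

lemma toTorus_quot : IsOpenQuotientMap (toTorus (n := n)) :=
  IsOpenQuotientMap.piMap fun _ => QuotientAddGroup.isOpenQuotientMap_mk

lemma exists_torus (h : 𝓢(Fin n → ℝ, ℂ)) :
    ∃ F : C(UnitAddTorus (Fin n), ℂ), ∀ y, F (toTorus y) = per h y := by
  have hq := (toTorus_quot (n := n)).isQuotientMap
  have key : ∀ y y' : Fin n → ℝ, toTorus y = toTorus y' → per h y = per h y' := by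
    intro y y' hyy
    have : ∀ i, ∃ m : ℤ, y i = y' i + m := by
      intro i
      have h1 : ((y i : ℝ) : UnitAddCircle) = (y' i : ℝ) := congrFun hyy i
      have h2 : ((y i - y' i : ℝ) : UnitAddCircle) = 0 := by
        rw [AddCircle.coe_sub, h1, sub_self]
      obtain ⟨m, hm⟩ := (AddCircle.coe_eq_zero_iff _).1 h2
      refine ⟨m, ?_⟩
      rw [zsmul_eq_mul, mul_one] at hm
      linarith
    choose m hm using this
    rw [← per_add h y' m]
    congr 1
    ext i
    simp [hm]
  let q : C(Fin n → ℝ, UnitAddTorus (Fin n)) := ⟨toTorus, hq.continuous⟩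
  have hq' : Topology.IsQuotientMap q := hq
  let P : C(Fin n → ℝ, ℂ) := ⟨per h, continuous_per h⟩
  have hP : Function.FactorsThrough P q := fun y y' hyy => key y y' hyy
  refine ⟨hq'.lift P hP, fun y => ?_⟩
  exact congrArg (fun G : C(Fin n → ℝ, ℂ) => G y) (hq'.lift_comp P hP)

lemma mFourier_toTorus (m : Fin n → ℤ) (y : Fin n → ℝ) :
    UnitAddTorus.mFourier m (toTorus y) = eR (fun i => (m i : ℝ)) y := by
  simp only [UnitAddTorus.mFourier, ContinuousMap.coe_mk, toTorus, Pi.map, eR]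
  simp only [fourier_coe_apply]
  rw [← Complex.exp_sum]
  congr 1
  push_cast
  rw [Finset.mul_sum]
  refine Finset.sum_congr rfl fun i _ => by simp; ring

def cube (k : Fin n → ℤ) : Set (Fin n → ℝ) :=
  {x | ∀ i, x i ∈ Set.Ioc (k i : ℝ) (k i + 1)}

lemma measurableSet_cube (k : Fin n → ℤ) : MeasurableSet (cube k) :=
  MeasurableSet.univ_pi' (fun _ => measurableSet_Ioc)

lemma cube_shift (G : (Fin n → ℝ) → ℂ) (k : Fin n → ℤ) :
    ∫ y in cube 0, G (y + fun i => (k i : ℝ)) = ∫ y in cube k, G y := by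
  have hm := measurePreserving_add_right (volume : Measure (Fin n → ℝ)) (fun i => (k i : ℝ))
  rw [← hm.setIntegral_preimage_emb (measurableEmbedding_addRight _) G (cube k)]
  congr 2
  ext x
  simp only [cube, Set.mem_ofPred_eq, Set.mem_preimage, Pi.add_apply, Set.mem_Ioc, Pi.zero_apply]
  refine forall_congr' fun i => ?_
  constructor <;> rintro ⟨h1, h2⟩ <;> constructor <;> push_cast at * <;> linarith

lemma hasSum_cube (G : (Fin n → ℝ) → ℂ) (hG : Integrable G) :
    HasSum (fun k : Fin n → ℤ => ∫ y in cube 0, G (y + fun i => (k i : ℝ))) (∫ y, G y) := by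
  have hU : (⋃ k : Fin n → ℤ, cube k) = Set.univ := by
    refine Set.eq_univ_of_forall fun x => Set.mem_iUnion.2 ⟨fun i => ⌈x i⌉ - 1, fun i => ?_⟩
    constructor
    · have := Int.ceil_lt_add_one (x i)
      push_cast; linarith
    · have := Int.le_ceil (x i)
      push_cast; linarith
  have hd : Pairwise (Function.onFun Disjoint (cube (n := n))) := by
    intro k l hkl
    rw [Function.onFun, Set.disjoint_left]
    intro x hx hy
    apply hkl
    ext i
    have h1 := hx i
    have h2 := hy i
    have h3 : (k i : ℝ) < l i + 1 := h1.1.trans_le h2.2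
    have h4 : (l i : ℝ) < k i + 1 := h2.1.trans_le h1.2
    have h5 : k i < l i + 1 := by exact_mod_cast h3
    have h6 : l i < k i + 1 := by exact_mod_cast h4
    omega
  have := hasSum_integral_iUnion (μ := volume) (f := G) (fun k => measurableSet_cube k) hd
    (by rw [hU]; exact hG.integrableOn)
  rw [hU, setIntegral_univ] at this
  have hfun : (fun k : Fin n → ℤ => ∫ y in cube 0, G (y + fun i => (k i : ℝ))) =
      fun k => ∫ y in cube k, G y := by
    funext k
    exact cube_shift G k
  rw [hfun]
  exact this

lemma eR_add_int (m k : Fin n → ℤ) (y : Fin n → ℝ) :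
    eR (fun i => (m i : ℝ)) (y + fun i => (k i : ℝ)) = eR (fun i => (m i : ℝ)) y := by
  unfold eR
  rw [Complex.exp_eq_exp_iff_exists_int]
  refine ⟨∑ i, m i * k i, ?_⟩
  push_cast
  simp only [Pi.add_apply]
  push_cast
  simp only [mul_add, Finset.sum_add_distrib]
  ring

lemma continuous_eR (ξ : Fin n → ℝ) : Continuous (eR ξ) := by
  unfold eR; fun_prop

lemma integrable_eR (ξ : Fin n → ℝ) (h : 𝓢(Fin n → ℝ, ℂ)) :
    Integrable (fun y => eR ξ y * h y) := by
  refine h.integrable.bdd_mul (c := 1) (continuous_eR ξ).aestronglyMeasurable ?_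
  exact Filter.Eventually.of_forall fun y => (norm_eR ξ y).le

lemma poisson_one (h : 𝓢(Fin n → ℝ, ℂ)) (y : Fin n → ℝ) :
    HasSum (fun p : Fin n → ℤ => (∫ y', eR (fun i => (p i : ℝ)) y' * h y') *
      eR (-fun i => (p i : ℝ)) y) (per h y) := by
  obtain ⟨F, hF⟩ := exists_torus h
  have hcoef : ∀ m : Fin n → ℤ, UnitAddTorus.mFourierCoeff F m =
      ∫ y', eR (-fun i => (m i : ℝ)) y' * h y' := by
    intro m
    rw [UnitAddTorus.mFourierCoeff_eq_integral F m 0]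
    have h1 := hasSum_cube _ (integrable_eR (fun i => ((-m) i : ℝ)) h)
    have hcube : {x : Fin n → ℝ | ∀ i, x i ∈ Set.Ioc ((0 : Fin n → ℝ) i) ((0 : Fin n → ℝ) i + 1)}
        = cube 0 := by simp [cube]
    rw [hcube]
    have h2 : HasSum (fun k : Fin n → ℤ => ∫ y in cube 0,
        eR (fun i => ((-m) i : ℝ)) y * h (y + fun i => (k i : ℝ)))
        (∫ y in cube 0, eR (fun i => ((-m) i : ℝ)) y * per h y) := by
      obtain ⟨C, hC0, hC⟩ := lattice_bound h 1 zero_le_one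
      have hvol : volume (cube (0 : Fin n → ℤ)) ≠ ⊤ := by
        have : cube (0 : Fin n → ℤ) ⊆ Metric.closedBall 0 1 := by
          intro x hx
          rw [mem_closedBall_zero_iff, pi_norm_le_iff_of_nonneg zero_le_one]
          intro i
          have := hx i
          simp at this
          rw [Real.norm_of_nonneg this.1.le]
          exact this.2
        exact ((measure_mono this).trans_lt measure_closedBall_lt_top).ne
      have : IsFiniteMeasure (volume.restrict (cube (0 : Fin n → ℤ))) := ⟨by
        rw [Measure.restrict_apply_univ]; exact hvol.lt_top⟩
      refine hasSum_integral_of_dominated_convergence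
        (fun k _ => C * ((1 + ‖fun i => (k i : ℝ)‖) ^ (2 * n))⁻¹) ?_ ?_ ?_ ?_ ?_
      · intro k
        exact ((continuous_eR _).mul (h.continuous.comp (by fun_prop))).aestronglyMeasurable
      · intro k
        filter_upwards [ae_restrict_mem (measurableSet_cube 0)] with x hx
        rw [norm_mul, norm_eR, one_mul]
        refine hC x k ?_
        rw [pi_norm_le_iff_of_nonneg zero_le_one]
        intro i
        have := hx i
        simp at this
        rw [Real.norm_of_nonneg this.1.le]
        exact this.2
      · exact Filter.Eventually.of_forall fun x => (summable_lattice n).mul_left C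
      · exact integrable_const _
      · exact Filter.Eventually.of_forall fun x => (lattice_summable h x).hasSum.mul_left _
    have h3 : ∫ y in cube 0, UnitAddTorus.mFourier (-m) (fun i => (y i : UnitAddCircle)) •
        F (fun i => (y i : UnitAddCircle)) =
        ∫ y in cube 0, eR (fun i => ((-m) i : ℝ)) y * per h y := by
      refine integral_congr_ae (Filter.Eventually.of_forall fun y => ?_)
      have e1 := mFourier_toTorus (-m) y
      have e2 := hF y
      simp only [smul_eq_mul]
      exact congrArg₂ (· * ·) e1 e2
    rw [h3]
    have h4 : (-fun i => (m i : ℝ)) = fun i => ((-m) i : ℝ) := by ext i; simp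
    rw [h4]
    refine h2.unique ?_
    convert h1 using 4 with k y
    rw [eR_add_int]
  have hsum : Summable (UnitAddTorus.mFourierCoeff F) := by
    obtain ⟨s, C, hC, hb⟩ := fourier_decay n (2 * n)
    refine Summable.of_norm_bounded (((summable_lattice n).mul_left C).mul_right
      ((s.sup (schwartzSeminormFamily ℂ (Fin n → ℝ) ℂ)) h)) fun m => ?_
    rw [hcoef]
    have := hb h (-fun i => (m i : ℝ))
    rwa [norm_neg] at this
  have := UnitAddTorus.hasSum_mFourier_series_apply_of_summable hsum (toTorus y)
  rw [hF] at this
  rw [← (Equiv.neg (Fin n → ℤ)).hasSum_iff]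
  convert this using 2 with m
  simp only [Function.comp, hcoef, mFourier_toTorus, smul_eq_mul, Equiv.neg_apply]
  have h4 : (-fun i => (m i : ℝ)) = fun i => ((-m) i : ℝ) := by ext i; simp
  have h5 : (-fun i => ((-m) i : ℝ)) = fun i => (m i : ℝ) := by ext i; simp
  rw [h4, h5]

/-- `k / N` as a real vector -/
noncomputable def lat (N : ℕ) (k : Fin n → ℤ) : Fin n → ℝ := fun i => (k i : ℝ) / N
/-- `N p` as a real vector -/
noncomputable def fr (N : ℕ) (p : Fin n → ℤ) : Fin n → ℝ := fun i => (N : ℝ) * p i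

lemma poisson (N : ℕ) (hN : 1 ≤ N) (h : 𝓢(Fin n → ℝ, ℂ)) (y : Fin n → ℝ) :
    HasSum (fun p : Fin n → ℤ => (N : ℂ) ^ n * ((∫ y', eR (fr N p) y' * h y') *
      eR (-fr N p) y)) (∑' k : Fin n → ℤ, h (y + lat N k)) := by
  have hN0 : (N : ℝ) ≠ 0 := by positivity
  let D : (Fin n → ℝ) ≃L[ℝ] (Fin n → ℝ) :=
    ContinuousLinearEquiv.smulLeft (Units.mk0 ((N : ℝ)⁻¹) (inv_ne_zero hN0))
  have hD : ∀ u, D u = (N : ℝ)⁻¹ • u := fun u => rfl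
  let hh : 𝓢(Fin n → ℝ, ℂ) := SchwartzMap.compCLMOfContinuousLinearEquiv ℂ D h
  have hhh : ∀ u, hh u = h ((N : ℝ)⁻¹ • u) := fun u => rfl
  have := poisson_one hh ((N : ℝ) • y)
  convert this using 1
  · ext p
    rw [← mul_assoc]
    congr 1
    · have e := Measure.integral_comp_inv_smul (volume : Measure (Fin n → ℝ))
        (fun y' => eR (fr N p) y' * h y') (N : ℝ)
      rw [Module.finrank_fin_fun, abs_of_nonneg (by positivity), Complex.real_smul] at e
      push_cast at e
      rw [← e]
      refine integral_congr_ae (Filter.Eventually.of_forall fun u => ?_)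
      simp only [hhh]
      congr 1
      unfold eR fr
      congr 3
      refine Finset.sum_congr rfl fun i _ => ?_
      simp
      field_simp
    · unfold eR fr
      congr 3
      refine Finset.sum_congr rfl fun i _ => ?_
      simp
      ring
  · unfold per
    refine tsum_congr fun k => ?_
    rw [hhh]
    congr 1
    ext i
    simp [lat]
    field_simp
end QP
end

section
open BigOperators MeasureTheory
open scoped SchwartzMap FourierTransform
namespace QP
variable {n : ℕ}

/-- integer vector as a real vector -/
def cst (k : Fin n → ℤ) : Fin n → ℝ := fun i => (k i : ℝ)

noncomputable def ph (θ : (Fin n → ℝ) × (Fin n → ℝ)) (w : (Fin n → ℤ) × (Fin n → ℤ)) : ℂ :=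
  Complex.exp (-(2 * Real.pi * Complex.I) * ((sigmaR n θ (castVec n w) : ℝ) : ℂ))

lemma exp_QR (N : ℕ) (w : (Fin n → ℤ) × (Fin n → ℤ)) :
    Complex.exp (2 * Real.pi * Complex.I * ((N : ℂ) * ((QR n (castVec n w) : ℝ) : ℂ))) = 1 := by
  rw [Complex.exp_eq_one_iff]
  refine ⟨N * ∑ i, w.1 i * w.2 i, ?_⟩
  simp only [QR, castVec]
  push_cast
  ring

lemma rho_int (N : ℕ) (w : (Fin n → ℤ) × (Fin n → ℤ)) (f : (Fin n → ℝ) → ℂ) (y : Fin n → ℝ) :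
    rho n N (castVec n w)
      (Complex.exp (Real.pi * Complex.I * ((QR n (castVec n w) : ℝ) : ℂ))) f y =
    eR (fr N w.2) y * f (y - cst w.1) := by
  unfold rho eR
  congr 1
  rw [← Complex.exp_nat_mul, ← Complex.exp_add]
  congr 1
  simp only [castVec, fr]
  push_cast
  simp only [mul_assoc, ← Finset.mul_sum]
  ring

lemma dual_int (N : ℕ) (w : (Fin n → ℤ) × (Fin n → ℤ)) (f : (Fin n → ℝ) → ℂ) (y : Fin n → ℝ) :
    rhoDualTest n N (castVec n w)
      (Complex.exp (Real.pi * Complex.I * ((QR n (castVec n w) : ℝ) : ℂ))) f y =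
    eR (fr N w.2) y * f (y + cst w.1) := by
  unfold rhoDualTest eR
  congr 1
  rw [← Complex.exp_nat_mul, ← Complex.exp_add]
  rw [← mul_one (Complex.exp (2 * Real.pi * Complex.I * ((∑ i, fr N w.2 i * y i : ℝ) : ℂ))),
    ← exp_QR N w, ← Complex.exp_add]
  congr 1
  simp only [castVec, fr]
  push_cast
  simp only [mul_assoc, ← Finset.mul_sum]
  ring

lemma norm_ph (θ : (Fin n → ℝ) × (Fin n → ℝ)) (w : (Fin n → ℤ) × (Fin n → ℤ)) :
    ‖ph θ w‖ = 1 := by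
  rw [ph, show -(2 * Real.pi * Complex.I) * ((sigmaR n θ (castVec n w) : ℝ) : ℂ) =
    ((-(2 * Real.pi * sigmaR n θ (castVec n w)) : ℝ) : ℂ) * Complex.I by push_cast; ring]
  exact Complex.norm_exp_ofReal_mul_I _

lemma sigmaR_add (θ : (Fin n → ℝ) × (Fin n → ℝ)) (w w' : (Fin n → ℤ) × (Fin n → ℤ)) :
    sigmaR n θ (castVec n (w + w')) = sigmaR n θ (castVec n w) + sigmaR n θ (castVec n w') := by
  simp only [sigmaR, castVec, Prod.fst_add, Prod.snd_add, Pi.add_apply, Int.cast_add, mul_add,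
    add_mul, Finset.sum_add_distrib]
  ring

lemma ph_add (θ : (Fin n → ℝ) × (Fin n → ℝ)) (w w' : (Fin n → ℤ) × (Fin n → ℤ)) :
    ph θ (w + w') = ph θ w * ph θ w' := by
  rw [ph, sigmaR_add, ph, ph, ← Complex.exp_add]
  congr 1
  push_cast
  ring

lemma ph_inv (θ : (Fin n → ℝ) × (Fin n → ℝ)) (w : (Fin n → ℤ) × (Fin n → ℤ)) :
    Complex.exp (2 * Real.pi * Complex.I * ((sigmaR n θ (castVec n w) : ℝ) : ℂ)) * ph θ w = 1 := by
  rw [ph, ← Complex.exp_add]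
  simp

/-- the integral occurring in `Ppairing` -/
noncomputable def II (N : ℕ) (f g : (Fin n → ℝ) → ℂ) (w : (Fin n → ℤ) × (Fin n → ℤ)) : ℂ :=
  ∫ y, eR (fr N w.2) y * (f (y - cst w.1) * g y)

lemma Ppairing_eq (N : ℕ) (θ : (Fin n → ℝ) × (Fin n → ℝ)) (f g : (Fin n → ℝ) → ℂ) :
    Ppairing n N θ f g = ∑' w, ph θ w * II N f g w := by
  unfold Ppairing II
  refine tsum_congr fun w => ?_
  rw [ph]
  congr 1
  refine integral_congr_ae (Filter.Eventually.of_forall fun y => ?_)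
  simp only [rho_int]
  ring

lemma seminorm_translate_mul_sup (f : 𝓢(Fin n → ℝ, ℂ)) (M : ℕ) (s0 : Finset (ℕ × ℕ)) :
    ∃ (s : Finset (ℕ × ℕ)) (C : ℝ), 0 ≤ C ∧ ∀ (g : 𝓢(Fin n → ℝ, ℂ)) (a : Fin n → ℝ),
      (s0.sup (schwartzSeminormFamily ℂ (Fin n → ℝ) ℂ)) (mulS (f.compSubConstCLM ℂ a) g) ≤
        C * ((1 + ‖a‖) ^ M)⁻¹ * (s.sup (schwartzSeminormFamily ℂ (Fin n → ℝ) ℂ)) g := by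
  classical
  choose s C hC hb using fun kl : ℕ × ℕ => seminorm_translate_mul f kl.1 kl.2 M
  refine ⟨s0.biUnion s, ∑ i ∈ s0, C i, Finset.sum_nonneg fun i _ => hC i, fun g a => ?_⟩
  refine Seminorm.finset_sup_apply_le
    (mul_nonneg (mul_nonneg (Finset.sum_nonneg fun i _ => hC i) (by positivity)) (apply_nonneg _ _)) fun i hi => ?_
  refine (hb i g a).trans ?_
  have h1 : C i ≤ ∑ i ∈ s0, C i := Finset.single_le_sum (fun i _ => hC i) hi
  have h2 : ((s i).sup (schwartzSeminormFamily ℂ (Fin n → ℝ) ℂ)) g ≤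
      ((s0.biUnion s).sup (schwartzSeminormFamily ℂ (Fin n → ℝ) ℂ)) g :=
    Seminorm.le_def.1 (Finset.sup_mono (Finset.subset_biUnion_of_mem s hi)) g
  have h3 : 0 ≤ ∑ i ∈ s0, C i := Finset.sum_nonneg fun i _ => hC i
  have := hC i
  gcongr

lemma norm_cst_le_fr (N : ℕ) (hN : 1 ≤ N) (p : Fin n → ℤ) : ‖cst p‖ ≤ ‖fr N p‖ := by
  rw [pi_norm_le_iff_of_nonneg (norm_nonneg _)]
  intro i
  refine le_trans ?_ (norm_le_pi_norm (fr N p) i)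
  simp only [cst, fr, norm_mul]
  have : (1:ℝ) ≤ ‖(N:ℝ)‖ := by simpa using hN
  nlinarith [norm_nonneg ((p i : ℝ))]

lemma II_bound (N : ℕ) (hN : 1 ≤ N) (f : 𝓢(Fin n → ℝ, ℂ)) :
    ∃ (s : Finset (ℕ × ℕ)) (C : ℝ), 0 ≤ C ∧ ∀ (g : 𝓢(Fin n → ℝ, ℂ)) w,
      ‖II N f g w‖ ≤ C * (s.sup (schwartzSeminormFamily ℂ (Fin n → ℝ) ℂ)) g *
        (((1 + ‖cst w.1‖) ^ (2 * n))⁻¹ * ((1 + ‖cst w.2‖) ^ (2 * n))⁻¹) := by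
  obtain ⟨s0, C0, hC0, hb0⟩ := fourier_decay n (2 * n)
  obtain ⟨s, C, hC, hb⟩ := seminorm_translate_mul_sup f (2 * n) s0
  refine ⟨s, C0 * C, by positivity, fun g w => ?_⟩
  have h1 := hb0 (mulS (f.compSubConstCLM ℂ (cst w.1)) g) (fr N w.2)
  have h2 : II N f g w = ∫ y, eR (fr N w.2) y * (mulS (f.compSubConstCLM ℂ (cst w.1)) g) y := by
    simp [II]
  rw [h2]
  refine h1.trans ?_
  have h3 := hb g (cst w.1)
  have h4 := norm_cst_le_fr N hN w.2
  have h5 : ((1 + ‖fr N w.2‖) ^ (2 * n))⁻¹ ≤ ((1 + ‖cst w.2‖) ^ (2 * n))⁻¹ := by gcongr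
  calc _ ≤ C0 * ((1 + ‖cst w.2‖) ^ (2 * n))⁻¹ * (C * ((1 + ‖cst w.1‖) ^ (2 * n))⁻¹ *
        (s.sup (schwartzSeminormFamily ℂ (Fin n → ℝ) ℂ)) g) := by gcongr
    _ = _ := by ring

lemma summable_lattice2 (n : ℕ) : Summable fun w : (Fin n → ℤ) × (Fin n → ℤ) =>
    ((1 + ‖cst w.1‖) ^ (2 * n))⁻¹ * ((1 + ‖cst w.2‖) ^ (2 * n))⁻¹ := by
  have key : ∀ φ : (Fin n → ℤ) → ℝ, Summable φ → (∀ k, 0 ≤ φ k) →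
      Summable fun w : (Fin n → ℤ) × (Fin n → ℤ) => φ w.1 * φ w.2 :=
    fun φ h h0 => Summable.mul_of_nonneg h h h0 h0
  have h : Summable fun k : Fin n → ℤ => ((1 + ‖cst k‖) ^ (2 * n))⁻¹ := summable_lattice n
  exact key _ h fun k => by positivity

lemma summable_II (N : ℕ) (hN : 1 ≤ N) (θ : (Fin n → ℝ) × (Fin n → ℝ)) (f g : 𝓢(Fin n → ℝ, ℂ)) :
    Summable fun w => ph θ w * II N f g w := by
  obtain ⟨s, C, hC, hb⟩ := II_bound N hN f
  refine Summable.of_norm_bounded ((summable_lattice2 n).mul_left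
    (C * (s.sup (schwartzSeminormFamily ℂ (Fin n → ℝ) ℂ)) g)) fun w => ?_
  rw [norm_mul, norm_ph, one_mul]
  exact hb g w

lemma exists_nu (N : ℕ) (hN : 1 ≤ N) (θ : (Fin n → ℝ) × (Fin n → ℝ)) (f : 𝓢(Fin n → ℝ, ℂ)) :
    ∃ ν : 𝓢(Fin n → ℝ, ℂ) →L[ℂ] ℂ, ∀ g, ν g = Ppairing n N θ f g := by
  have hintg : ∀ (g : 𝓢(Fin n → ℝ, ℂ)) (w : (Fin n → ℤ) × (Fin n → ℤ)),
      Integrable (fun y => eR (fr N w.2) y * (f (y - cst w.1) * g y)) := by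
    intro g w
    have := integrable_eR (fr N w.2) (mulS (f.compSubConstCLM ℂ (cst w.1)) g)
    simpa using this
  refine ⟨SchwartzMap.mkCLMtoNormedSpace (𝕜 := ℂ) (fun g => Ppairing n N θ f g) ?_ ?_ ?_, fun g => rfl⟩
  · intro g g'
    simp only [Ppairing_eq]
    rw [← (summable_II N hN θ f g).tsum_add (summable_II N hN θ f g')]
    refine tsum_congr fun w => ?_
    rw [← mul_add]
    congr 1
    unfold II
    rw [← integral_add (hintg g w) (hintg g' w)]
    refine integral_congr_ae (Filter.Eventually.of_forall fun y => ?_)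
    simp only [add_apply]
    ring
  · intro a g
    simp only [Ppairing_eq, RingHom.id_apply, smul_eq_mul]
    rw [← tsum_mul_left]
    refine tsum_congr fun w => ?_
    rw [mul_left_comm]
    congr 1
    unfold II
    rw [← integral_const_mul]
    refine integral_congr_ae (Filter.Eventually.of_forall fun y => ?_)
    simp only [smul_apply, smul_eq_mul]
    ring
  · obtain ⟨s, C, hC, hb⟩ := II_bound N hN f
    refine ⟨s, C * ∑' w : (Fin n → ℤ) × (Fin n → ℤ),
      ((1 + ‖cst w.1‖) ^ (2 * n))⁻¹ * ((1 + ‖cst w.2‖) ^ (2 * n))⁻¹, ?_, fun g => ?_⟩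
    · exact mul_nonneg hC (tsum_nonneg fun w => by positivity)
    · rw [Ppairing_eq]
      have := tsum_of_norm_bounded ((summable_lattice2 n).mul_left
        (C * (s.sup (schwartzSeminormFamily ℂ (Fin n → ℝ) ℂ)) g)).hasSum
        (f := fun w => ph θ w * II N f g w) (fun w => by
          rw [norm_mul, norm_ph, one_mul]; exact hb g w)
      rw [tsum_mul_left] at this
      refine this.trans (le_of_eq ?_)
      ring

lemma eR_fr_add (N : ℕ) (p k : Fin n → ℤ) (y : Fin n → ℝ) :
    eR (fr N p) (y + cst k) = eR (fr N p) y := by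
  have : (fr N p) = fun i => (((N : ℤ) * p i : ℤ) : ℝ) := by ext i; simp [fr]
  rw [this]
  exact eR_add_int (fun i => (N : ℤ) * p i) k y

lemma eR_fr_mul (N : ℕ) (p p' : Fin n → ℤ) (y : Fin n → ℝ) :
    eR (fr N (p + p')) y = eR (fr N p) y * eR (fr N p') y := by
  unfold eR fr
  rw [← Complex.exp_add]
  congr 1
  simp only [Pi.add_apply]
  push_cast
  simp only [mul_add, add_mul, Finset.sum_add_distrib]

lemma nu_mem (N : ℕ) (θ : (Fin n → ℝ) × (Fin n → ℝ))
    (rhoT : (Fin n → ℝ) × (Fin n → ℝ) → ℂ →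
      (SchwartzMap ((Fin n) → ℝ) ℂ →L[ℂ] SchwartzMap ((Fin n) → ℝ) ℂ))
    (hrhoT : ∀ x ζ f z, rhoT x ζ f z = rhoDualTest n N x ζ (⇑f) z)
    (f : 𝓢(Fin n → ℝ, ℂ)) (ν : 𝓢(Fin n → ℝ, ℂ) →L[ℂ] ℂ)
    (hν : ∀ g, ν g = Ppairing n N θ f g) : ν ∈ quasiPeriodicSet n N rhoT θ := by
  intro w g
  rw [hν, hν, Ppairing_eq, Ppairing_eq,
    ← (Equiv.addRight w).tsum_eq (fun w => ph θ w * II N f g w), ← tsum_mul_left]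
  refine tsum_congr fun w' => ?_
  simp only [Equiv.coe_addRight]
  rw [ph_add, show ∀ a b c d : ℂ, a * (b * c * d) = (a * c) * (b * d) by intros; ring,
    ph_inv, one_mul]
  congr 1
  unfold II
  rw [← integral_add_right_eq_self
    (fun y => eR (fr N (w' + w).2) y * (f (y - cst (w' + w).1) * g y)) (cst w.1)]
  refine integral_congr_ae (Filter.Eventually.of_forall fun y => ?_)
  simp only [hrhoT, dual_int]
  rw [eR_fr_add, Prod.snd_add, eR_fr_mul]
  have : y + cst w.1 - cst (w' + w).1 = y - cst w'.1 := by
    ext i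
    simp [cst]
  rw [this]
  ring
end QP
end

section
open BigOperators MeasureTheory
open scoped SchwartzMap FourierTransform
namespace QP
variable {n : ℕ}

noncomputable def x0 (N : ℕ) (θ : (Fin n → ℝ) × (Fin n → ℝ)) : Fin n → ℝ := fun i => -θ.1 i / N

lemma norm_cst_le_lat (N : ℕ) (hN : 1 ≤ N) (k : Fin n → ℤ) :
    1 + ‖cst k‖ ≤ N * (1 + ‖lat N k‖) := by
  have h1 : (1:ℝ) ≤ N := by exact_mod_cast hN
  have h2 : ‖cst k‖ ≤ N * ‖lat N k‖ := by
    rw [pi_norm_le_iff_of_nonneg (by positivity)]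
    intro i
    have := norm_le_pi_norm (lat N k) i
    have h3 : cst k i = N * lat N k i := by
      simp only [cst, lat]; field_simp
    rw [h3, norm_mul]
    simp only [RCLike.norm_natCast]
    gcongr
  linarith

lemma ph_zero_left (N : ℕ) (hN : 1 ≤ N) (θ : (Fin n → ℝ) × (Fin n → ℝ)) (p : Fin n → ℤ) :
    ph θ (0, p) = eR (-fr N p) (x0 N θ) := by
  have hN0 : (N : ℝ) ≠ 0 := by positivity
  unfold ph eR
  rw [show ∀ a b : ℂ, -a * b = a * -b by intros; ring, ← Complex.ofReal_neg]
  congr 2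
  rw [Complex.ofReal_inj]
  simp only [sigmaR, castVec, fr, x0, Pi.neg_apply]
  simp
  rw [← Finset.sum_neg_distrib]
  refine Finset.sum_congr rfl fun i _ => ?_
  field_simp

lemma eR_fr_neg (N : ℕ) (p : Fin n → ℤ) : fr N (-p) = -fr N p := by
  ext i; simp [fr]

lemma hasSum_of_eq {ι : Type*} {u v : ι → ℂ} {c : ℂ} (hv : HasSum v c) (h : ∀ i, u i = v i) :
    HasSum u c := by
  rw [funext h]; exact hv

lemma factA (N : ℕ) (hN : 1 ≤ N) (θ : (Fin n → ℝ) × (Fin n → ℝ))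
    (rhoT : (Fin n → ℝ) × (Fin n → ℝ) → ℂ →
      (SchwartzMap ((Fin n) → ℝ) ℂ →L[ℂ] SchwartzMap ((Fin n) → ℝ) ℂ))
    (hrhoT : ∀ x ζ f z, rhoT x ζ f z = rhoDualTest n N x ζ (⇑f) z)
    (ν : 𝓢(Fin n → ℝ, ℂ) →L[ℂ] ℂ) (hν : ν ∈ quasiPeriodicSet n N rhoT θ)
    (h b : 𝓢(Fin n → ℝ, ℂ)) :
    HasSum (fun k : Fin n → ℤ => ν (mulS (h.compSubConstCLM ℂ (-lat N k)) b))
      ((∑' k : Fin n → ℤ, h (x0 N θ + lat N k)) * ν b) := by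
  let Fp : (Fin n → ℤ) → 𝓢(Fin n → ℝ, ℂ) := fun p => rhoT (castVec n (0, p))
    (Complex.exp (Real.pi * Complex.I * ((QR n (castVec n (0, p)) : ℝ) : ℂ))) b
  have hFp : ∀ p y, Fp p y = eR (fr N p) y * b y := by
    intro p y
    simp only [Fp, hrhoT, dual_int]
    have : y + cst (0 : Fin n → ℤ) = y := by ext i; simp [cst]
    rw [this]
  have hνF : ∀ p, ν (Fp (-p)) = eR (-fr N p) (x0 N θ) * ν b := by
    intro p
    have h1 := hν (0, -p) b
    rw [← ph_zero_left N hN]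
    refine h1.trans ?_
    congr 1
    rw [ph]
    congr 1
    simp [sigmaR, castVec]
  let a : (Fin n → ℤ) → ℂ := fun p => (N : ℂ) ^ n * ∫ y', eR (fr N p) y' * h y'
  have hS1 : ∀ k l, Summable fun p : Fin n → ℤ =>
      SchwartzMap.seminorm ℂ k l (a p • Fp (-p)) := by
    intro k l
    obtain ⟨s0, C0, hC0, hb0⟩ := fourier_decay n (2 * n + l)
    obtain ⟨C, hC, hb⟩ := seminorm_eR_mul b k l
    set S := (s0.sup (schwartzSeminormFamily ℂ (Fin n → ℝ) ℂ)) h with hS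
    have hS0 : 0 ≤ S := apply_nonneg _ _
    clear_value S
    refine Summable.of_nonneg_of_le (fun p => apply_nonneg _ _) (fun p => ?_)
      ((summable_lattice n).mul_left ((N:ℝ) ^ n * C0 * S * C))
    rw [map_smul_eq_mul]
    have h1 := hb0 h (fr N p)
    have h2 := hb (fr N (-p)) (Fp (-p)) (hFp (-p))
    rw [eR_fr_neg, norm_neg] at h2
    have h3 : ‖a p‖ ≤ (N:ℝ) ^ n * (C0 * ((1 + ‖fr N p‖) ^ (2 * n + l))⁻¹ * S) := by
      simp only [a, norm_mul, norm_pow, RCLike.norm_natCast]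
      rw [hS]
      gcongr
    have h4 : ((1 + ‖fr N p‖) ^ (2 * n))⁻¹ ≤ ((1 + ‖cst p‖) ^ (2 * n))⁻¹ := by
      have := norm_cst_le_fr N hN p
      gcongr
    calc ‖a p‖ * SchwartzMap.seminorm ℂ k l (Fp (-p)) ≤
        ((N:ℝ) ^ n * (C0 * ((1 + ‖fr N p‖) ^ (2 * n + l))⁻¹ * S)) * (C * (1 + ‖fr N p‖) ^ l) := by
          gcongr
      _ = (N:ℝ) ^ n * C0 * S * C * ((1 + ‖fr N p‖) ^ (2 * n))⁻¹ := by
          rw [pow_add, mul_inv]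
          field_simp
      _ ≤ (N:ℝ) ^ n * C0 * S * C * ((1 + ‖cst p‖) ^ (2 * n))⁻¹ := by gcongr
  have hS2 : ∀ k l, Summable fun m : Fin n → ℤ =>
      SchwartzMap.seminorm ℂ k l (mulS (h.compSubConstCLM ℂ (-lat N m)) b) := by
    intro k l
    obtain ⟨s, C, hC, hb⟩ := seminorm_translate_mul h k l (2 * n)
    set S := (s.sup (schwartzSeminormFamily ℂ (Fin n → ℝ) ℂ)) b with hS
    have hS0 : 0 ≤ S := apply_nonneg _ _
    refine Summable.of_nonneg_of_le (fun p => apply_nonneg _ _) (fun m => ?_)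
      ((summable_lattice n).mul_left (C * (N:ℝ) ^ (2 * n) * S))
    have h1 := hb b (-lat N m)
    rw [norm_neg, ← hS] at h1
    clear_value S
    refine h1.trans ?_
    have h2 := norm_cst_le_lat N hN m
    have h3 : ((1 + ‖lat N m‖) ^ (2 * n))⁻¹ ≤ (N:ℝ) ^ (2 * n) * ((1 + ‖cst m‖) ^ (2 * n))⁻¹ := by
      rw [inv_le_comm₀ (by positivity) (by positivity), mul_inv, inv_inv, ← div_eq_inv_mul,
        div_le_iff₀ (by positivity), ← mul_pow]
      gcongr
      linarith
    calc C * ((1 + ‖lat N m‖) ^ (2 * n))⁻¹ * S ≤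
        C * ((N:ℝ) ^ (2 * n) * ((1 + ‖cst m‖) ^ (2 * n))⁻¹) * S := by gcongr
      _ = C * (N:ℝ) ^ (2 * n) * S * ((1 + ‖cst m‖) ^ (2 * n))⁻¹ := by ring
  obtain ⟨H1, hH1, hp1⟩ := hasSum_schwartz _ hS1
  obtain ⟨H2, hH2, hp2⟩ := hasSum_schwartz _ hS2
  have hE : H1 = H2 := by
    ext y
    have e1 : H1 y = (∑' k : Fin n → ℤ, h (y + lat N k)) * b y := by
      refine (hp1 y).unique ?_
      have := (poisson N hN h y).mul_right (b y)
      refine hasSum_of_eq this fun p => ?_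
      simp only [smul_apply, smul_eq_mul, hFp, a, eR_fr_neg]
      ring
    have e2 : H2 y = (∑' k : Fin n → ℤ, h (y + lat N k)) * b y := by
      rw [← (hp2 y).tsum_eq, ← tsum_mul_right]
      refine tsum_congr fun k => ?_
      simp
    rw [e1, e2]
  have r1 := ν.hasSum hH1
  have r2 := ν.hasSum hH2
  have e : ν H1 = (∑' k : Fin n → ℤ, h (x0 N θ + lat N k)) * ν b := by
    refine r1.unique ?_
    have := (poisson N hN h (x0 N θ)).mul_right (ν b)
    refine hasSum_of_eq this fun p => ?_
    simp only [Function.comp, map_smul, smul_eq_mul, hνF, a]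
    ring
  rw [← e, hE]
  exact r2

lemma exists_bump (n : ℕ) (r : ℝ) (hr : 0 < r) : ∃ χ : 𝓢(Fin n → ℝ, ℂ),
    (∀ y, ‖y‖ ≤ r → χ y = 1) ∧ ∀ y, 2 * r ≤ ‖y‖ → χ y = 0 := by
  let B : ContDiffBump (0 : Fin n → ℝ) := ⟨r, 2 * r, hr, by linarith⟩
  have hc : HasCompactSupport (fun y => ((B y : ℝ) : ℂ)) :=
    B.hasCompactSupport.comp_left (g := fun t : ℝ => (t : ℂ)) (by simp)
  have hd : ContDiff ℝ (⊤ : ℕ∞) (fun y => ((B y : ℝ) : ℂ)) :=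
    Complex.ofRealCLM.contDiff.comp B.contDiff
  refine ⟨hc.toSchwartzMap hd, fun y hy => ?_, fun y hy => ?_⟩
  · have : B y = 1 := B.one_of_mem_closedBall (by simpa using hy)
    show ((B y : ℝ) : ℂ) = 1
    simp [this]
  · have : B y = 0 := B.zero_of_le_dist (by simpa using hy)
    show ((B y : ℝ) : ℂ) = 0
    simp [this]

noncomputable def xk (N : ℕ) (θ : (Fin n → ℝ) × (Fin n → ℝ)) (k : Fin n → ℤ) : Fin n → ℝ :=
  x0 N θ + lat N k

lemma norm_lat (N : ℕ) (hN : 1 ≤ N) (m : Fin n → ℤ) (hm : m ≠ 0) : 1 / (N : ℝ) ≤ ‖lat N m‖ := by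
  obtain ⟨i, hi⟩ := Function.ne_iff.1 hm
  refine le_trans ?_ (norm_le_pi_norm (lat N m) i)
  simp only [lat, norm_div, RCLike.norm_natCast]
  gcongr
  have : (1:ℤ) ≤ |m i| := Int.one_le_abs hi
  rw [Real.norm_eq_abs]
  exact_mod_cast this

lemma lat_sub (N : ℕ) (k l : Fin n → ℤ) : lat N k - lat N l = lat N (k - l) := by
  ext i; simp [lat]; ring

lemma lat_zero (N : ℕ) : lat N (0 : Fin n → ℤ) = 0 := by ext i; simp [lat]

lemma lat_neg (N : ℕ) (k : Fin n → ℤ) : lat N (-k) = -lat N k := by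
  ext i; simp [lat]; ring

lemma factG (N : ℕ) (hN : 1 ≤ N) (θ : (Fin n → ℝ) × (Fin n → ℝ))
    (rhoT : (Fin n → ℝ) × (Fin n → ℝ) → ℂ →
      (SchwartzMap ((Fin n) → ℝ) ℂ →L[ℂ] SchwartzMap ((Fin n) → ℝ) ℂ))
    (hrhoT : ∀ x ζ f z, rhoT x ζ f z = rhoDualTest n N x ζ (⇑f) z)
    (χ χ' : 𝓢(Fin n → ℝ, ℂ)) (hχ1 : ∀ y, ‖y‖ ≤ 1 / (8 * N) → χ y = 1)
    (hχ0 : ∀ y, 1 / (4 * N) ≤ ‖y‖ → χ y = 0)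
    (hχ'1 : ∀ y, ‖y‖ ≤ 1 / (4 * N) → χ' y = 1)
    (hχ'0 : ∀ y, 1 / (2 * N) ≤ ‖y‖ → χ' y = 0)
    (ν : 𝓢(Fin n → ℝ, ℂ) →L[ℂ] ℂ) (hν : ν ∈ quasiPeriodicSet n N rhoT θ)
    (g : 𝓢(Fin n → ℝ, ℂ)) :
    HasSum (fun k => g (xk N θ k) * ν (χ'.compSubConstCLM ℂ (xk N θ k))) (ν g) := by
  have hNpos : (0:ℝ) < N := by exact_mod_cast hN
  have hi4 : 1 / (4 * (N:ℝ)) = 1 / 4 * (1 / N) := by field_simp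
  have hi2 : 1 / (2 * (N:ℝ)) = 1 / 2 * (1 / N) := by field_simp
  have hipos : 0 < 1 / (N:ℝ) := by positivity
  have hlat0 : ∀ m : Fin n → ℤ, m ≠ 0 → χ (lat N m) = 0 := by
    intro m hm
    refine hχ0 _ ?_
    have := norm_lat N hN m hm
    linarith
  have hχz : χ 0 = 1 := hχ1 0 (by simp)
  have step1 : HasSum (fun k => ν (mulS (χ.compSubConstCLM ℂ (xk N θ k)) g)) (ν g) := by
    have h1 := factA N hN θ rhoT hrhoT ν hν (χ.compSubConstCLM ℂ (x0 N θ)) g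
    have e1 : ∑' k : Fin n → ℤ, (χ.compSubConstCLM ℂ (x0 N θ)) (x0 N θ + lat N k) = 1 := by
      rw [tsum_eq_single 0]
      · simp [lat_zero, hχz]
      · intro m hm
        simp [hlat0 m hm]
    rw [e1, one_mul] at h1
    rw [← (Equiv.neg (Fin n → ℤ)).hasSum_iff]
    convert h1 using 2 with k
    simp only [Function.comp, Equiv.neg_apply]
    congr 2
    ext y
    simp only [SchwartzMap.compSubConstCLM_apply, xk, lat_neg]
    congr 1
    abel
  convert step1 using 2 with k
  set h := mulS (χ.compSubConstCLM ℂ (xk N θ k)) g with hh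
  have h2 := factA N hN θ rhoT hrhoT ν hν h (χ'.compSubConstCLM ℂ (xk N θ k))
  have e2 : ∑' m : Fin n → ℤ, h (x0 N θ + lat N m) = g (xk N θ k) := by
    rw [tsum_eq_single k]
    · simp [hh, xk, hχz]
    · intro m hm
      have : x0 N θ + lat N m - xk N θ k = lat N (m - k) := by
        rw [← lat_sub, xk]; abel
      simp [hh, this, hlat0 (m - k) (sub_ne_zero.2 hm)]
  rw [e2] at h2
  refine h2.unique ?_
  have e3 : mulS (h.compSubConstCLM ℂ (-lat N 0)) (χ'.compSubConstCLM ℂ (xk N θ k)) = h := by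
    ext y
    simp only [mulS_apply, SchwartzMap.compSubConstCLM_apply, hh, lat_zero, neg_zero, sub_zero]
    by_cases hy : ‖y - xk N θ k‖ ≤ 1 / (4 * N)
    · rw [hχ'1 _ hy, mul_one]
    · rw [hχ0 _ (not_le.1 hy).le]; simp
  have h3 := hasSum_single (f := fun m : Fin n → ℤ =>
    ν (mulS (h.compSubConstCLM ℂ (-lat N m)) (χ'.compSubConstCLM ℂ (xk N θ k)))) 0 ?_
  · rw [e3] at h3
    exact h3
  · intro m hm
    have : mulS (h.compSubConstCLM ℂ (-lat N m)) (χ'.compSubConstCLM ℂ (xk N θ k)) = 0 := by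
      ext y
      simp only [mulS_apply, SchwartzMap.compSubConstCLM_apply, hh, sub_neg_eq_add, zero_apply]
      by_cases hy : 1 / (2 * N) ≤ ‖y - xk N θ k‖
      · rw [hχ'0 _ hy, mul_zero]
      · have h5 : 1 / (4 * (N:ℝ)) ≤ ‖y + lat N m - xk N θ k‖ := by
          have h6 := norm_lat N hN m hm
          have h7 : ‖lat N m‖ ≤ ‖y + lat N m - xk N θ k‖ + ‖y - xk N θ k‖ := by
            have := norm_sub_le (y + lat N m - xk N θ k) (y - xk N θ k)
            rwa [show y + lat N m - xk N θ k - (y - xk N θ k) = lat N m by abel] at this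
          rw [not_le] at hy
          linarith
        rw [hχ0 _ h5]; simp
    rw [this, map_zero]
end QP
end

section
open BigOperators MeasureTheory
open scoped SchwartzMap FourierTransform
namespace QP
variable {n : ℕ}

lemma xk_sub (N : ℕ) (hN : 1 ≤ N) (θ : (Fin n → ℝ) × (Fin n → ℝ)) (k q : Fin n → ℤ) :
    xk N θ k - cst q = xk N θ (k - fun i => N * q i) := by
  have hN0 : (N : ℝ) ≠ 0 := by positivity
  ext i
  simp [xk, lat, cst]
  field_simp
  ring

lemma c_period (N : ℕ) (hN : 1 ≤ N) (θ : (Fin n → ℝ) × (Fin n → ℝ))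
    (rhoT : (Fin n → ℝ) × (Fin n → ℝ) → ℂ →
      (SchwartzMap ((Fin n) → ℝ) ℂ →L[ℂ] SchwartzMap ((Fin n) → ℝ) ℂ))
    (hrhoT : ∀ x ζ f z, rhoT x ζ f z = rhoDualTest n N x ζ (⇑f) z)
    (ν : 𝓢(Fin n → ℝ, ℂ) →L[ℂ] ℂ) (hν : ν ∈ quasiPeriodicSet n N rhoT θ)
    (χ : 𝓢(Fin n → ℝ, ℂ)) (k q : Fin n → ℤ) :
    ph θ (q, 0) * ν (χ.compSubConstCLM ℂ (xk N θ (k - fun i => N * q i))) =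
      ν (χ.compSubConstCLM ℂ (xk N θ k)) := by
  have h1 := hν (q, 0) (χ.compSubConstCLM ℂ (xk N θ k))
  have h2 : rhoT (castVec n (q, 0)) (Complex.exp (Real.pi * Complex.I *
      ((QR n (castVec n (q, 0)) : ℝ) : ℂ))) (χ.compSubConstCLM ℂ (xk N θ k)) =
      χ.compSubConstCLM ℂ (xk N θ (k - fun i => N * q i)) := by
    ext y
    rw [hrhoT, dual_int, ← xk_sub N hN]
    have : eR (fr N (0 : Fin n → ℤ)) y = 1 := by simp [eR, fr]
    simp only [this, one_mul, SchwartzMap.compSubConstCLM_apply]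
    congr 1
    abel
  rw [h2] at h1
  rw [h1, ← mul_assoc, mul_comm (ph θ (q, 0)), ph_inv, one_mul]

lemma Ppairing_bump (N : ℕ) (hN : 1 ≤ N) (θ : (Fin n → ℝ) × (Fin n → ℝ))
    (f χ' : 𝓢(Fin n → ℝ, ℂ)) (hχ'1 : χ' 0 = 1)
    (hχ'0 : ∀ m : Fin n → ℤ, m ≠ 0 → χ' (lat N m) = 0) (k : Fin n → ℤ) :
    Ppairing n N θ f (χ'.compSubConstCLM ℂ (xk N θ k)) =
      ∑' q : Fin n → ℤ, ph θ (q, 0) * (((N : ℂ) ^ n)⁻¹ * f (xk N θ k - cst q)) := by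
  have hN0 : ((N : ℂ) ^ n) ≠ 0 := pow_ne_zero _ (by exact_mod_cast (by omega : N ≠ 0))
  rw [Ppairing_eq, (summable_II N hN θ f (χ'.compSubConstCLM ℂ (xk N θ k))).tsum_prod]
  refine tsum_congr fun q => ?_
  set h := mulS (f.compSubConstCLM ℂ (cst q)) (χ'.compSubConstCLM ℂ (xk N θ k)) with hh
  have h1 := (poisson N hN h (x0 N θ)).tsum_eq
  have e2 : ∑' m : Fin n → ℤ, h (x0 N θ + lat N m) = f (xk N θ k - cst q) := by
    rw [tsum_eq_single k]
    · simp [hh, xk, hχ'1]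
    · intro m hm
      have : x0 N θ + lat N m - xk N θ k = lat N (m - k) := by
        rw [← lat_sub, xk]; abel
      simp [hh, this, hχ'0 (m - k) (sub_ne_zero.2 hm)]
  rw [e2, tsum_mul_left] at h1
  rw [← h1, inv_mul_cancel_left₀ hN0, ← tsum_mul_left]
  refine tsum_congr fun p => ?_
  have h3 : ph θ (q, p) = ph θ (q, 0) * ph θ (0, p) := by
    rw [← ph_add]; simp
  have h4 : II N f (χ'.compSubConstCLM ℂ (xk N θ k)) (q, p) = ∫ y', eR (fr N p) y' * h y' := by
    simp [II, hh]
  rw [h3, h4, ph_zero_left N hN]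
  ring

lemma surj (N : ℕ) (hN : 1 ≤ N) (θ : (Fin n → ℝ) × (Fin n → ℝ))
    (rhoT : (Fin n → ℝ) × (Fin n → ℝ) → ℂ →
      (SchwartzMap ((Fin n) → ℝ) ℂ →L[ℂ] SchwartzMap ((Fin n) → ℝ) ℂ))
    (hrhoT : ∀ x ζ f z, rhoT x ζ f z = rhoDualTest n N x ζ (⇑f) z)
    (ν : 𝓢(Fin n → ℝ, ℂ) →L[ℂ] ℂ) (hν : ν ∈ quasiPeriodicSet n N rhoT θ) :
    ∃ f : 𝓢(Fin n → ℝ, ℂ), ∀ g : 𝓢(Fin n → ℝ, ℂ), ν g = Ppairing n N θ f g := by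
  have hNpos : (0:ℝ) < N := by exact_mod_cast hN
  have hN0 : ((N : ℂ) ^ n) ≠ 0 := pow_ne_zero _ (by exact_mod_cast (by omega : N ≠ 0))
  obtain ⟨χ, hχ1, hχ0⟩ := exists_bump n (1 / (8 * N)) (by positivity)
  obtain ⟨χ', hχ'1, hχ'0⟩ := exists_bump n (1 / (4 * N)) (by positivity)
  rw [show 2 * (1 / (8 * (N:ℝ))) = 1 / (4 * N) by field_simp; norm_num] at hχ0
  rw [show 2 * (1 / (4 * (N:ℝ))) = 1 / (2 * N) by field_simp; norm_num] at hχ'0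
  have hi4 : 1 / (4 * (N:ℝ)) = 1 / 4 * (1 / N) := by field_simp
  have hi2 : 1 / (2 * (N:ℝ)) = 1 / 2 * (1 / N) := by field_simp
  have hipos : 0 < 1 / (N:ℝ) := by positivity
  have hχz : χ 0 = 1 := hχ1 0 (by simp)
  have hχ'z : χ' 0 = 1 := hχ'1 0 (by simp)
  have hlat : ∀ m : Fin n → ℤ, m ≠ 0 → χ (lat N m) = 0 := by
    intro m hm
    refine hχ0 _ ?_
    have := norm_lat N hN m hm
    linarith
  have hlat' : ∀ m : Fin n → ℤ, m ≠ 0 → χ' (lat N m) = 0 := by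
    intro m hm
    refine hχ'0 _ ?_
    have := norm_lat N hN m hm
    linarith
  set c : (Fin n → ℤ) → ℂ := fun k => ν (χ'.compSubConstCLM ℂ (xk N θ k)) with hc
  let ι : (Fin n → Fin N) → (Fin n → ℤ) := fun j i => ((j i : ℕ) : ℤ)
  let f : 𝓢(Fin n → ℝ, ℂ) := ∑ j : Fin n → Fin N,
    ((N : ℂ) ^ n * c (ι j)) • χ.compSubConstCLM ℂ (xk N θ (ι j))
  have hf : ∀ l, f (xk N θ l) = ∑ j : Fin n → Fin N,
      ((N : ℂ) ^ n * c (ι j)) * χ (lat N (l - ι j)) := by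
    intro l
    simp only [f, sum_apply, smul_apply, SchwartzMap.compSubConstCLM_apply, smul_eq_mul]
    refine Finset.sum_congr rfl fun j _ => ?_
    rw [← lat_sub, xk, xk, add_sub_add_left_eq_sub]
  have hf0 : ∀ l, (∀ j, l ≠ ι j) → f (xk N θ l) = 0 := by
    intro l hl
    rw [hf]
    refine Finset.sum_eq_zero fun j _ => ?_
    rw [hlat _ (sub_ne_zero.2 (hl j)), mul_zero]
  have hιinj : Function.Injective ι := by
    intro a b hab
    ext i
    have := congrFun hab i
    simp only [ι] at this
    exact_mod_cast this
  have hf1 : ∀ j, f (xk N θ (ι j)) = (N : ℂ) ^ n * c (ι j) := by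
    intro j
    rw [hf, Finset.sum_eq_single j]
    · rw [sub_self, lat_zero, hχz, mul_one]
    · intro j' _ hj
      rw [hlat _ (sub_ne_zero.2 fun e => hj (hιinj e).symm), mul_zero]
    · simp
  refine ⟨f, fun g => ?_⟩
  obtain ⟨μ, hμ⟩ := exists_nu N hN θ f
  have hμm := nu_mem N θ rhoT hrhoT f μ hμ
  have key : ∀ k, μ (χ'.compSubConstCLM ℂ (xk N θ k)) = ν (χ'.compSubConstCLM ℂ (xk N θ k)) := by
    intro k
    rw [hμ, Ppairing_bump N hN θ f χ' hχ'z hlat' k]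
    have hNz : (N : ℤ) ≠ 0 := by omega
    let j : Fin n → Fin N := fun i => ⟨(k i % N).toNat, by
      have h1 := Int.emod_nonneg (k i) hNz
      have h2 := Int.emod_lt_of_pos (k i) (by omega : (0:ℤ) < N)
      omega⟩
    have hj : (k - fun i => (N:ℤ) * (k i / N)) = ι j := by
      ext i
      simp only [ι, j, Pi.sub_apply]
      have h1 := Int.emod_nonneg (k i) hNz
      rw [Int.toNat_of_nonneg h1]
      have := Int.emod_add_mul_ediv (k i) N
      linarith
    rw [tsum_eq_single (fun i => k i / N)]
    · rw [xk_sub N hN, hj, hf1, inv_mul_cancel_left₀ hN0, ← hj]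
      exact c_period N hN θ rhoT hrhoT ν hν χ' k _
    · intro q hq
      rw [xk_sub N hN, hf0]
      · simp
      · intro j' hj'
        apply hq
        ext i
        have h1 := congrFun hj' i
        simp only [ι, Pi.sub_apply] at h1
        have h2 := (j' i).2
        have h3 : k i = ((j' i : ℕ) : ℤ) + N * q i := by linarith
        rw [h3, Int.add_mul_ediv_left _ _ hNz, Int.ediv_eq_zero_of_lt (by omega) (by omega), zero_add]
  rw [← hμ]
  have s1 := factG N hN θ rhoT hrhoT χ χ' hχ1 hχ0 hχ'1 hχ'0 ν hν g
  have s2 := factG N hN θ rhoT hrhoT χ χ' hχ1 hχ0 hχ'1 hχ'0 μ hμm g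
  simp only [key] at s2
  exact s1.unique s2
end QP
end

/-- `P_{N,θ}` maps `𝒮(ℝⁿ)` onto the space `H_{N,θ}` of quasi-periodic
distributions: for every Schwartz `f`, the tempered distribution `P_{N,θ}f` belongs to
`H_{N,θ}`, and every `ν ∈ H_{N,θ}` is of the form `P_{N,θ}f` for some Schwartz `f`. -/
theorem projector_surjective (n N : ℕ) (hN : 1 ≤ N) (θ : (Fin n → ℝ) × (Fin n → ℝ))
    (rhoT : (Fin n → ℝ) × (Fin n → ℝ) → ℂ →
      (SchwartzMap ((Fin n) → ℝ) ℂ →L[ℂ] SchwartzMap ((Fin n) → ℝ) ℂ))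
    (hrhoT : ∀ x ζ f z, rhoT x ζ f z = rhoDualTest n N x ζ (⇑f) z) :
    (∀ f : SchwartzMap ((Fin n) → ℝ) ℂ,
      ∃ ν ∈ quasiPeriodicSet n N rhoT θ,
        ∀ g : SchwartzMap ((Fin n) → ℝ) ℂ, ν g = Ppairing n N θ (⇑f) (⇑g)) ∧
    (∀ ν ∈ quasiPeriodicSet n N rhoT θ,
      ∃ f : SchwartzMap ((Fin n) → ℝ) ℂ,
        ∀ g : SchwartzMap ((Fin n) → ℝ) ℂ, ν g = Ppairing n N θ (⇑f) (⇑g)) := by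
  refine ⟨fun f => ?_, fun ν hν => ?_⟩
  · obtain ⟨ν, h⟩ := QP.exists_nu N hN θ f
    exact ⟨ν, QP.nu_mem N θ rhoT hrhoT f ν h, h⟩
  · exact QP.surj N hN θ rhoT hrhoT ν hν
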